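/- arXiv:1507.01283 — 3 statements merged into one kernel-verified Lean document; each statement's English description precedes it below -/
import Mathlib

section
/- For every integer n ≥ 1 and every prime power q, the cardinality of Res_n(F_q) equals q^n · Σ_{(a,b,c)} μ(a) · q^{b−1} · gcd(c, q−1), where the sum ranges over all ordered triples (a,b,c) of positive integers with a·b·c = n. -/
open Polynomial

/-- The resultant `Res(φ, ψ)` of a monic polynomial `φ` and a polynomial `ψ`, computed
(inside the algebraic closure) as the product `∏ ψ(αᵢ)` over the roots `αᵢ` of `φ`,
counted with multiplicity. -/
noncomputable def resultantAC {k : Type*} [Field k] (φ ψ : k[X]) : AlgebraicClosure k :=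
  (((φ.map (algebraMap k (AlgebraicClosure k))).roots).map
    fun α => (ψ.map (algebraMap k (AlgebraicClosure k))).eval α).prod

/-- `Res_n(k)`: the set of pairs `(φ, ψ)` of monic degree-`n` polynomials over `k`
with `Res(φ, ψ) = 1`. -/
def ResPairs (k : Type*) [Field k] (n : ℕ) : Set (k[X] × k[X]) :=
  {p | p.1.Monic ∧ p.1.natDegree = n ∧ p.2.Monic ∧ p.2.natDegree = n ∧
    resultantAC p.1 p.2 = 1}


lemma aux_ker_count {G C : Type*} [Group G] [Finite G] [CommGroup C] [Finite C] [IsCyclic C]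
    (f : G →* C) (P : ℕ → Prop) [DecidablePred P]
    (hP : ∀ d ∈ (Nat.card C).divisors, P d ↔ f.range ≤ (powMonoidHom d : C →* C).range) :
    Nat.card C * Nat.card f.ker =
      ∑ d ∈ (Nat.card C).divisors, d.totient * (if P d then Nat.card G else 0) := by
  have hC : Nat.card C ≠ 0 := Nat.card_pos.ne'
  set e := f.range.index with he
  have h1 : Nat.card f.range * e = Nat.card C := Subgroup.card_mul_index _
  have h2 : Nat.card f.ker * Nat.card f.range = Nat.card G := by
    rw [← Subgroup.index_ker]; exact Subgroup.card_mul_index _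
  have he0 : e ≠ 0 := by rintro h; rw [h] at h1; simp at h1; exact hC h1.symm
  have key : ∀ d ∈ (Nat.card C).divisors, P d ↔ d ∣ e := by
    intro d hd
    rw [hP d hd]
    have hd' := Nat.dvd_of_mem_divisors hd
    have hidx : (powMonoidHom d : C →* C).range.index = d := by
      rw [IsCyclic.index_powMonoidHom_range, Nat.gcd_eq_right hd']
    constructor
    · intro h
      rw [← hidx]
      exact Subgroup.index_dvd_of_le h
    · rintro ⟨t, ht⟩
      -- elements of the range are killed by `card range`; use cyclicity
      obtain ⟨g, hg⟩ := IsCyclic.exists_generator (α := C)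
      intro x hx
      obtain ⟨k, hk⟩ := Subgroup.mem_zpowers_iff.1 (hg x)
      have ho : orderOf g = Nat.card C := orderOf_eq_card_of_forall_mem_zpowers hg
      have hx1 : x ^ (Nat.card f.range) = 1 := by
        have := pow_card_eq_one' (x := (⟨x, hx⟩ : f.range))
        simpa using congrArg Subtype.val this
      rw [← hk, ← zpow_natCast, ← zpow_mul, ← orderOf_dvd_iff_zpow_eq_one, ho, ← h1] at hx1
      have hr : (Nat.card f.range : ℤ) ≠ 0 := by
        have : 0 < Nat.card f.range := Nat.card_pos
        omega
      have : (e : ℤ) ∣ k := by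
        push_cast at hx1
        rw [mul_comm k] at hx1
        exact Int.dvd_of_mul_dvd_mul_left hr hx1
      obtain ⟨j, hj⟩ := this
      refine ⟨g ^ (t * j : ℤ), ?_⟩
      rw [← hk, hj, ht]
      simp only [powMonoidHom_apply]
      rw [← zpow_natCast, ← zpow_mul]
      push_cast
      ring_nf
  have h3 : ∑ d ∈ (Nat.card C).divisors, d.totient * (if P d then Nat.card G else 0)
      = (∑ d ∈ e.divisors, d.totient) * Nat.card G := by
    rw [Finset.sum_mul]
    have : e.divisors = (Nat.card C).divisors.filter (· ∣ e) := by
      ext d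
      simp only [Nat.mem_divisors, Finset.mem_filter]
      exact ⟨fun h => ⟨⟨h.1.trans (h1 ▸ dvd_mul_left _ _), hC⟩, h.1⟩, fun h => ⟨h.2, he0⟩⟩
    rw [this, Finset.sum_filter]
    refine Finset.sum_congr rfl fun d hd => ?_
    simp only [key d hd]
    split_ifs <;> simp
  rw [h3, Nat.sum_totient, ← h1, ← h2]
  ring

lemma aux_arith (q Q n : ℕ) :
    ∑ x ∈ n.divisorsAntidiagonal, ∑ y ∈ x.2.divisorsAntidiagonal,
          (ArithmeticFunction.moebius x.1) * (q : ℤ) ^ (y.1 - 1) *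
            (Nat.gcd y.2 Q : ℤ) =
    ∑ x ∈ n.divisorsAntidiagonal, (q:ℤ)^(x.1 - 1) * (if x.2 ∣ Q then (x.2.totient : ℤ) else 0) := by
  let B : ArithmeticFunction ℤ := ⟨fun b => if b = 0 then 0 else (q:ℤ)^(b-1), by simp⟩
  let G : ArithmeticFunction ℤ := ⟨fun c => if c = 0 then 0 else (Nat.gcd c Q : ℤ), by simp⟩
  let T : ArithmeticFunction ℤ := ⟨fun d => if d ∣ Q then (d.totient : ℤ) else 0, by simp⟩
  have hG : G = (ArithmeticFunction.zeta : ArithmeticFunction ℤ) * T := by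
    ext c
    rw [ArithmeticFunction.coe_zeta_mul_apply]
    by_cases hc : c = 0
    · simp [hc]
    · simp only [G, T, ArithmeticFunction.coe_mk, hc, if_false]
      rw [← Finset.sum_filter, ← Nat.sum_totient (c.gcd Q)]
      push_cast
      refine Finset.sum_congr ?_ fun _ _ => rfl
      ext d
      simp [Nat.mem_divisors, Nat.dvd_gcd_iff, hc]
  have h : ArithmeticFunction.moebius * (B * G) = B * T := by
    rw [hG]
    rw [show ArithmeticFunction.moebius * (B * ((ArithmeticFunction.zeta : ArithmeticFunction ℤ) * T)) = (ArithmeticFunction.moebius * (ArithmeticFunction.zeta : ArithmeticFunction ℤ)) * (B * T) by ring,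
      ArithmeticFunction.moebius_mul_coe_zeta, one_mul]
  have h' := congrArg (fun f => f n) h
  simp only [ArithmeticFunction.mul_apply, Finset.mul_sum] at h'
  convert h' using 1
  · refine Finset.sum_congr rfl fun x hx => Finset.sum_congr rfl fun y hy => ?_
    have h1 := Nat.ne_zero_of_mem_divisorsAntidiagonal hy
    simp only [B, G, ArithmeticFunction.coe_mk, h1.1, h1.2, if_false]
    ring
  · refine Finset.sum_congr rfl fun x hx => ?_
    have h1 := Nat.ne_zero_of_mem_divisorsAntidiagonal hx
    simp only [B, T, ArithmeticFunction.coe_mk, h1.1, if_false]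

abbrev MM (F : Type*) [Field F] (n : ℕ) := {p : F[X] // p.Monic ∧ p.natDegree = n}

section
variable {F : Type*} [Field F] [Fintype F]

lemma card_MM (n : ℕ) : Nat.card (MM F n) = Fintype.card F ^ n := by
  rw [Nat.card_congr ((monicEquivDegreeLT n).trans (degreeLTEquiv F n).toEquiv)]
  simp

instance (n : ℕ) : Finite (MM F n) :=
  Finite.of_equiv _ ((monicEquivDegreeLT n).trans (degreeLTEquiv F n).toEquiv).symm

lemma monic_dvd_antisymm {a b : F[X]} (ha : a.Monic) (hb : b.Monic) (h1 : a ∣ b) (h2 : b ∣ a) :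
    a = b := eq_of_monic_of_associated ha hb (associated_of_dvd_dvd h1 h2)

noncomputable def CPC (F : Type*) [Field F] (m : ℕ) : ℕ :=
  Nat.card {p : MM F m × MM F m // IsCoprime p.1.1 p.2.1}

lemma gcd_sum (m : ℕ) :
    ∑ k : Fin (m + 1), Fintype.card F ^ (k : ℕ) * CPC F (m - k) = Fintype.card F ^ (2 * m) := by
  let f : (Σ k : Fin (m+1), MM F k × {p : MM F (m - k) × MM F (m - k) // IsCoprime p.1.1 p.2.1}) →
      MM F m × MM F m := fun x =>
    (⟨x.2.1.1 * x.2.2.1.1.1, x.2.1.2.1.mul x.2.2.1.1.2.1, by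
        rw [x.2.1.2.1.natDegree_mul x.2.2.1.1.2.1, x.2.1.2.2, x.2.2.1.1.2.2]; omega⟩,
     ⟨x.2.1.1 * x.2.2.1.2.1, x.2.1.2.1.mul x.2.2.1.2.2.1, by
        rw [x.2.1.2.1.natDegree_mul x.2.2.1.2.2.1, x.2.1.2.2, x.2.2.1.2.2.2]; omega⟩)
  have hf : Function.Bijective f := by
    constructor
    · rintro ⟨⟨k, hk⟩, ⟨g, hg, hgk⟩, ⟨⟨⟨a, ha, hak⟩, ⟨b, hb, hbk⟩⟩, hab⟩⟩
        ⟨⟨k', hk'⟩, ⟨g', hg', hgk'⟩, ⟨⟨⟨a', ha', hak'⟩, ⟨b', hb', hbk'⟩⟩, hab'⟩⟩ h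
      simp only [f, Prod.mk.injEq, Subtype.mk.injEq] at h
      obtain ⟨h1, h2⟩ := h
      have e : g = g' := by
        apply monic_dvd_antisymm hg hg'
        · obtain ⟨u, v, huv⟩ := hab'
          refine ⟨u * a + v * b, ?_⟩
          simp only at huv
          linear_combination (-g') * huv - u * h1 - v * h2
        · obtain ⟨u, v, huv⟩ := hab
          refine ⟨u * a' + v * b', ?_⟩
          simp only at huv
          linear_combination (-g) * huv + u * h1 + v * h2
      subst e
      have e2 := mul_left_cancel₀ hg.ne_zero h1
      have e3 := mul_left_cancel₀ hg.ne_zero h2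
      simp only at hgk hgk'
      have : k = k' := hgk.symm.trans hgk'
      subst this e2 e3
      rfl
    · rintro ⟨⟨A, hA, hAm⟩, ⟨B, hB, hBm⟩⟩
      obtain ⟨g, hg, ⟨a, ha⟩, ⟨b, hb⟩, u, v, huv⟩ : ∃ g : F[X], g.Monic ∧ g ∣ A ∧ g ∣ B ∧
          ∃ u v, g = A * u + B * v := by
        classical
        have hg0 : EuclideanDomain.gcd A B ≠ 0 := by
          intro h; exact hA.ne_zero (EuclideanDomain.gcd_eq_zero_iff.1 h).1
        refine ⟨normalize (EuclideanDomain.gcd A B), monic_normalize hg0,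
          normalize_dvd_iff.2 (EuclideanDomain.gcd_dvd_left A B),
          normalize_dvd_iff.2 (EuclideanDomain.gcd_dvd_right A B), ?_⟩
        have h := EuclideanDomain.gcd_eq_gcd_ab A B
        refine ⟨EuclideanDomain.gcdA A B * ↑(normUnit (EuclideanDomain.gcd A B)),
          EuclideanDomain.gcdB A B * ↑(normUnit (EuclideanDomain.gcd A B)), ?_⟩
        rw [normalize_apply]
        linear_combination (↑(normUnit (EuclideanDomain.gcd A B)) : F[X]) * h
      have hg0 : g ≠ 0 := hg.ne_zero
      have ham : a.Monic := hg.of_mul_monic_left (ha ▸ hA)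
      have hbm : b.Monic := hg.of_mul_monic_left (hb ▸ hB)
      have d1 : g.natDegree + a.natDegree = m := by
        rw [← hg.natDegree_mul ham, ← ha, hAm]
      have d2 : g.natDegree + b.natDegree = m := by
        rw [← hg.natDegree_mul hbm, ← hb, hBm]
      have hc : IsCoprime a b := by
        refine ⟨u, v, ?_⟩
        apply mul_left_cancel₀ hg0
        rw [ha, hb] at huv
        linear_combination -huv
      refine ⟨⟨⟨g.natDegree, by omega⟩, ⟨g, hg, rfl⟩,
        ⟨(⟨a, ham, ?_⟩, ⟨b, hbm, ?_⟩), hc⟩⟩, ?_⟩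
      · simp only; omega
      · simp only; omega
      · simp only [f, Prod.mk.injEq, Subtype.mk.injEq]
        exact ⟨ha.symm, hb.symm⟩
  have := Nat.card_congr (Equiv.ofBijective f hf)
  rw [Nat.card_sigma, Nat.card_prod, card_MM] at this
  simp only [Nat.card_prod, card_MM] at this
  rw [two_mul, pow_add, ← this]
  rfl

lemma CC_val (m : ℕ) (hm : 1 ≤ m) :
    CPC F m + Fintype.card F ^ (2 * m - 1) = Fintype.card F ^ (2 * m) := by
  obtain ⟨m, rfl⟩ : ∃ k, m = k + 1 := ⟨m - 1, by omega⟩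
  have h1 := gcd_sum (F := F) (m + 1)
  have h0 := gcd_sum (F := F) m
  rw [Fin.sum_univ_succ] at h1
  have : ∑ i : Fin (m + 1), Fintype.card F ^ (i.succ : ℕ) * CPC F (m + 1 - i.succ) =
     Fintype.card F * ∑ k : Fin (m + 1), Fintype.card F ^ (k : ℕ) * CPC F (m - k) := by
    rw [Finset.mul_sum]
    refine Finset.sum_congr rfl fun i _ => ?_
    simp [pow_succ]; ring
  rw [this, h0] at h1
  simp only [Fin.val_zero, pow_zero, one_mul, Nat.sub_zero] at h1
  rw [← h1, show 2 * (m + 1) - 1 = 2 * m + 1 by omega, pow_succ]; ring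

lemma card_coprime_lift (m n : ℕ) (hmn : m ≤ n) (η : MM F m) :
    Nat.card {ψ : MM F n // IsCoprime η.1 ψ.1} =
      Fintype.card F ^ (n - m) * Nat.card {χ : MM F m // IsCoprime η.1 χ.1} := by
  obtain ⟨η, hη, hηm⟩ := η
  let f : MM F (n - m) × MM F m → MM F n := fun x => ⟨η * x.1.1 + (x.2.1 - η), by
    have hd : (x.2.1 - η).degree < (η * x.1.1).degree := by
      have h1 : (x.2.1 - η).degree < x.2.1.degree := by
        apply degree_sub_lt_left
        · rw [degree_eq_natDegree x.2.2.1.ne_zero, degree_eq_natDegree hη.ne_zero, x.2.2.2, hηm]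
        · exact x.2.2.1.ne_zero
        · rw [x.2.2.1.leadingCoeff, hη.leadingCoeff]
      refine h1.trans_le ?_
      rw [degree_eq_natDegree x.2.2.1.ne_zero, degree_eq_natDegree (hη.mul x.1.2.1).ne_zero,
        hη.natDegree_mul x.1.2.1, x.2.2.2, hηm]
      exact_mod_cast Nat.le_add_right _ _
    refine ⟨(hη.mul x.1.2.1).add_of_left hd, ?_⟩
    rw [natDegree_add_eq_left_of_degree_lt hd, hη.natDegree_mul x.1.2.1, hηm, x.1.2.2]; omega⟩
  have hf : Function.Bijective f := by
    refine Function.Injective.bijective_of_nat_card_le ?_ ?_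
    · rintro ⟨⟨s, hs, hsm⟩, ⟨c, hc, hcm⟩⟩ ⟨⟨s', hs', hsm'⟩, ⟨c', hc', hcm'⟩⟩ h
      simp only [f, Subtype.mk.injEq] at h
      have h2 : η * (s - s') = c' - c := by linear_combination h
      have h3 : c' - c = 0 := by
        apply eq_zero_of_dvd_of_degree_lt (Dvd.intro _ h2)
        have : (c' - c).degree < c'.degree := by
          apply degree_sub_lt_left
          · rw [degree_eq_natDegree hc'.ne_zero, degree_eq_natDegree hc.ne_zero, hcm, hcm']
          · exact hc'.ne_zero
          · rw [hc.leadingCoeff, hc'.leadingCoeff]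
        refine this.trans_le ?_
        rw [degree_eq_natDegree hc'.ne_zero, degree_eq_natDegree hη.ne_zero, hηm, hcm']
      rw [h3] at h2
      have h4 := (mul_eq_zero.1 h2).resolve_left hη.ne_zero
      have e1 := sub_eq_zero.1 h3
      have e2 := sub_eq_zero.1 h4
      subst e1 e2; rfl
    · rw [Nat.card_prod, card_MM, card_MM, card_MM, ← pow_add]
      apply le_of_eq; congr 1; omega
  have e := Equiv.ofBijective f hf
  have := Nat.card_congr ((Equiv.ofBijective f hf).subtypeEquiv
    (p := fun x => IsCoprime η x.2.1) (q := fun ψ => IsCoprime η ψ.1) (by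
      rintro ⟨s, c⟩
      show _ ↔ IsCoprime η (η * s.1 + (c.1 - η))
      rw [show η * s.1 + (c.1 - η) = c.1 + η * (s.1 - 1) by ring]
      exact (IsCoprime.add_mul_left_right_iff).symm))
  simp only at this ⊢
  rw [← this, ← card_MM, ← Nat.card_prod]
  exact Nat.card_congr
    { toFun := fun x => (x.1.1, ⟨x.1.2, x.2⟩)
      invFun := fun x => ⟨(x.1, x.2.1), x.2.2⟩
      left_inv := fun _ => rfl
      right_inv := fun _ => rfl }
end

section
variable {F : Type*} [Field F]

lemma resultantAC_eq {φ : F[X]} (hφ : φ.Monic) (ψ : F[X]) :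
    algebraMap F (AlgebraicClosure F) (resultant φ ψ) = resultantAC φ ψ := by
  rw [← resultant_map_map]
  have := resultant_eq_prod_eval (φ.map (algebraMap F (AlgebraicClosure F)))
    (ψ.map (algebraMap F (AlgebraicClosure F))) ψ.natDegree natDegree_map_le
    (IsAlgClosed.splits _)
  rw [natDegree_map, (hφ.map _).leadingCoeff, one_pow, one_mul] at this
  rw [this, resultantAC]

lemma res_ext {φ : F[X]} (hφ : φ.Monic) {ψ : F[X]} {x : F}
    (h : resultantAC φ ψ = algebraMap F (AlgebraicClosure F) x) : resultant φ ψ = x := by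
  apply (algebraMap F (AlgebraicClosure F)).injective
  rw [resultantAC_eq hφ, h]

lemma res_mul {φ : F[X]} (hφ : φ.Monic) (a b : F[X]) :
    resultant φ (a * b) = resultant φ a * resultant φ b := by
  apply res_ext hφ
  rw [map_mul, resultantAC_eq hφ, resultantAC_eq hφ, resultantAC, resultantAC, resultantAC,
    ← Multiset.prod_map_mul]
  simp

lemma res_one {φ : F[X]} (hφ : φ.Monic) : resultant φ 1 = 1 := by
  apply res_ext hφ
  simp [resultantAC]

lemma res_mul_left {φ φ' : F[X]} (hφ : φ.Monic) (hφ' : φ'.Monic) (a : F[X]) :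
    resultant (φ * φ') a = resultant φ a * resultant φ' a := by
  apply res_ext (hφ.mul hφ')
  rw [map_mul, resultantAC_eq hφ, resultantAC_eq hφ', resultantAC, resultantAC, resultantAC,
    Polynomial.map_mul, roots_mul ((hφ.map _).mul (hφ'.map _)).ne_zero, Multiset.map_add,
    Multiset.prod_add]

lemma res_pow_left {φ : F[X]} (hφ : φ.Monic) (e : ℕ) (a : F[X]) :
    resultant (φ ^ e) a = resultant φ a ^ e := by
  induction e with
  | zero =>
    rw [pow_zero, pow_zero]
    apply res_ext monic_one
    simp [resultantAC]
  | succ e ih => rw [pow_succ, res_mul_left (hφ.pow e) hφ, ih, pow_succ]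

lemma res_congr {φ : F[X]} (hφ : φ.Monic) {a b : F[X]} (h : φ ∣ a - b) :
    resultant φ a = resultant φ b := by
  apply res_ext hφ
  rw [resultantAC_eq hφ, resultantAC, resultantAC]
  congr 1
  refine Multiset.map_congr rfl fun α hα => ?_
  obtain ⟨c, hc⟩ := h
  rw [sub_eq_iff_eq_add.1 hc]
  have h0 := (mem_roots'.1 hα).2
  simp only [IsRoot.def] at h0
  simp [h0]

lemma res_surj [Finite F] {p : F[X]} (hp : p.Monic) (hi : Irreducible p) (x : F) :
    ∃ u : F[X], resultant p u = x := by
  have : Fact (Irreducible p) := ⟨hi⟩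
  have : Module.Finite F (AdjoinRoot p) := hp.finite_adjoinRoot
  have : Finite (AdjoinRoot p) := Module.finite_of_finite F
  obtain ⟨y, hy⟩ := FiniteField.norm_surjective F (AdjoinRoot p) x
  obtain ⟨u, rfl⟩ := AdjoinRoot.mk_surjective y
  refine ⟨u, ?_⟩
  apply res_ext hp
  rw [← hy, Algebra.norm_eq_prod_embeddings F (AlgebraicClosure F)]
  have hnd : (p.aroots (AlgebraicClosure F)).Nodup :=
    nodup_aroots_iff_of_splits hi.ne_zero (IsAlgClosed.splits _) |>.2
      (PerfectField.separable_of_irreducible hi)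
  rw [resultantAC]
  change (Multiset.map _ (p.aroots (AlgebraicClosure F))).prod = _
  classical
  rw [show p.aroots (AlgebraicClosure F) = (p.aroots (AlgebraicClosure F)).toFinset.val by
    rw [Multiset.toFinset_val, hnd.dedup]]
  change ∏ α ∈ (p.aroots (AlgebraicClosure F)).toFinset, _ = _
  symm
  refine Finset.prod_bij (fun σ _ => (AdjoinRoot.equiv (AlgebraicClosure F) F p hi.ne_zero σ).1)
    ?_ ?_ ?_ ?_
  · intro σ _
    exact Multiset.mem_toFinset.2 (AdjoinRoot.equiv (AlgebraicClosure F) F p hi.ne_zero σ).2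
  · intro σ _ τ _ h
    exact (AdjoinRoot.equiv (AlgebraicClosure F) F p hi.ne_zero).injective (Subtype.ext h)
  · intro b hb
    exact ⟨(AdjoinRoot.equiv (AlgebraicClosure F) F p hi.ne_zero).symm
      ⟨b, Multiset.mem_toFinset.1 hb⟩, Finset.mem_univ _, by simp⟩
  · intro σ _
    have : (AdjoinRoot.equiv (AlgebraicClosure F) F p hi.ne_zero σ).1 = σ (AdjoinRoot.root p) := by
      simp [AdjoinRoot.equiv, PowerBasis.liftEquiv']
    rw [this, eval_map_algebraMap, ← AdjoinRoot.aeval_eq, aeval_algHom_apply]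

lemma res_ne_zero_iff {φ : F[X]} (hφ : φ.Monic) (r : F[X]) :
    resultant φ r ≠ 0 ↔ IsCoprime φ r := by
  rw [← isUnit_resultant_iff_isCoprime hφ, isUnit_iff_ne_zero]

lemma crt {a b : F[X]} (h : IsCoprime a b) (u v : F[X]) : ∃ s, a ∣ s - u ∧ b ∣ s - v := by
  obtain ⟨x, y, hxy⟩ := h
  refine ⟨x * a * v + y * b * u, ⟨x * (v - u), ?_⟩, ⟨y * (u - v), ?_⟩⟩
  · linear_combination u * hxy
  · linear_combination v * hxy

lemma pow_of_res [Finite F] (d : ℕ) (hd : d ∣ Nat.card Fˣ) (N : ℕ) : ∀ φ : F[X], φ.Monic →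
    φ.natDegree ≤ N → (∀ r, IsCoprime φ r → ∃ x : F, resultant φ r = x ^ d) →
    ∃ η : F[X], η.Monic ∧ η ^ d = φ := by
  induction N with
  | zero =>
    intro φ hφ hN _
    exact ⟨1, monic_one, by rw [one_pow, eq_one_of_monic_natDegree_zero hφ (by omega)]⟩
  | succ N ih =>
    intro φ hφ hN h
    by_cases h1 : φ = 1
    · exact ⟨1, monic_one, by rw [one_pow, h1]⟩
    obtain ⟨p, hp, hi, hpd⟩ := exists_monic_irreducible_factor φ
      (fun hu => h1 (hφ.eq_one_of_isUnit hu))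
    have hfin : FiniteMultiplicity p φ :=
      FiniteMultiplicity.of_not_isUnit hi.not_isUnit hφ.ne_zero
    obtain ⟨φ', hφ', hnd⟩ := hfin.exists_eq_pow_mul_and_not_dvd
    set e := multiplicity p φ
    have he : e ≠ 0 := by
      intro h0
      rw [h0, pow_zero, one_mul] at hφ'
      exact hnd (hφ' ▸ hpd)
    have hm' : φ'.Monic := (hp.pow e).of_mul_monic_left (hφ' ▸ hφ)
    have hcop : IsCoprime p φ' := (hi.coprime_iff_not_dvd).2 hnd
    have hres : ∀ s, resultant φ s = resultant p s ^ e * resultant φ' s := by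
      intro s; rw [hφ', res_mul_left (hp.pow e) hm', res_pow_left hp]
    have hdeg : φ'.natDegree ≤ N := by
      have h2 : φ.natDegree = e * p.natDegree + φ'.natDegree := by
        conv_lhs => rw [hφ']
        rw [(hp.pow e).natDegree_mul hm', hp.natDegree_pow]
      have : 0 < e * p.natDegree := Nat.mul_pos (by omega) hi.natDegree_pos
      omega
    -- d ∣ e
    have hde : d ∣ e := by
      obtain ⟨g, hg⟩ := IsCyclic.exists_generator (α := Fˣ)
      have ho : orderOf g = Nat.card Fˣ := orderOf_eq_card_of_forall_mem_zpowers hg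
      obtain ⟨u, hu⟩ := res_surj hp hi (g : F)
      obtain ⟨s, hs1, hs2⟩ := crt hcop u 1
      have hr : resultant φ s = (g : F) ^ e := by
        rw [hres, res_congr hp hs1, res_congr hm' hs2, res_one hm', hu, mul_one]
      have hc : IsCoprime φ s := by
        rw [← res_ne_zero_iff hφ, hr]; exact pow_ne_zero _ g.ne_zero
      obtain ⟨x, hx⟩ := h s hc
      rw [hr] at hx
      have hd0 : d ≠ 0 := by
        rintro rfl; exact (Nat.card_pos (α := Fˣ)).ne' (zero_dvd_iff.1 hd)
      have hx0 : x ≠ 0 := by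
        rintro rfl
        rw [zero_pow hd0] at hx
        exact pow_ne_zero _ g.ne_zero hx
      obtain ⟨k, hk⟩ := Subgroup.mem_zpowers_iff.1 (hg (Units.mk0 x hx0))
      have h3 : g ^ ((e : ℤ) - k * d) = 1 := by
        rw [zpow_sub, zpow_mul, hk, zpow_natCast, zpow_natCast, mul_inv_eq_one]
        ext; simpa using hx
      rw [← orderOf_dvd_iff_zpow_eq_one, ho] at h3
      have h4 : (d : ℤ) ∣ (e : ℤ) - k * d := (Int.natCast_dvd_natCast.2 hd).trans h3
      have h5 : (d : ℤ) ∣ e := by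
        have := dvd_add h4 (dvd_mul_left (d : ℤ) k)
        simpa using this
      exact_mod_cast h5
    obtain ⟨η, hη, hηd⟩ := ih φ' hm' hdeg (by
      intro r hr
      obtain ⟨s, hs1, hs2⟩ := crt hcop 1 r
      have hr' : resultant φ s = resultant φ' r := by
        rw [hres, res_congr hp hs1, res_congr hm' hs2, res_one hp, one_pow, one_mul]
      rw [← hr']
      apply h
      rw [← res_ne_zero_iff hφ, hr', res_ne_zero_iff hm']
      exact hr)
    obtain ⟨t, ht⟩ := hde
    refine ⟨p ^ t * η, (hp.pow t).mul hη, ?_⟩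
    rw [mul_pow, hηd, ← pow_mul, mul_comm t d, ← ht]
    exact hφ'.symm

noncomputable def resHom {φ : F[X]} (hφ : φ.Monic) : AdjoinRoot φ →* F where
  toFun x := resultant φ (AdjoinRoot.mk_surjective (g := φ) x).choose
  map_one' := by
    rw [← res_one hφ]
    apply res_congr hφ
    rw [← AdjoinRoot.mk_eq_mk, (AdjoinRoot.mk_surjective (g := φ) 1).choose_spec, map_one]
  map_mul' x y := by
    rw [← res_mul hφ]
    apply res_congr hφ
    rw [← AdjoinRoot.mk_eq_mk, (AdjoinRoot.mk_surjective (g := φ) _).choose_spec, map_mul,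
      (AdjoinRoot.mk_surjective (g := φ) _).choose_spec,
      (AdjoinRoot.mk_surjective (g := φ) _).choose_spec]

lemma resHom_mk {φ : F[X]} (hφ : φ.Monic) (a : F[X]) :
    resHom hφ (AdjoinRoot.mk φ a) = resultant φ a := by
  apply res_congr hφ
  rw [← AdjoinRoot.mk_eq_mk, (AdjoinRoot.mk_surjective (g := φ) _).choose_spec]

lemma isUnit_mk {φ : F[X]} (a : F[X]) : IsUnit (AdjoinRoot.mk φ a) ↔ IsCoprime φ a := by
  constructor
  · intro h
    obtain ⟨y, hy⟩ := h.exists_right_inv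
    obtain ⟨b, rfl⟩ := AdjoinRoot.mk_surjective y
    rw [← map_mul, ← map_one (AdjoinRoot.mk φ), AdjoinRoot.mk_eq_mk] at hy
    obtain ⟨c, hc⟩ := hy
    exact ⟨-c, b, by linear_combination hc⟩
  · rintro ⟨x, y, h⟩
    have := congrArg (AdjoinRoot.mk φ) h
    rw [map_add, map_mul, map_mul, AdjoinRoot.mk_self, mul_zero, zero_add, map_one] at this
    exact IsUnit.of_mul_eq_one_right _ this

variable [Fintype F]

lemma mk_bij {n : ℕ} (φ : MM F n) :
    Function.Bijective (fun ψ : MM F n => AdjoinRoot.mk φ.1 ψ.1) := by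
  obtain ⟨φ, hφ, hn⟩ := φ
  constructor
  · rintro ⟨c, hc, hcm⟩ ⟨c', hc', hcm'⟩ h
    simp only [AdjoinRoot.mk_eq_mk] at h
    have h3 : c - c' = 0 := by
      apply eq_zero_of_dvd_of_degree_lt h
      have : (c - c').degree < c.degree := by
        apply degree_sub_lt_left
        · rw [degree_eq_natDegree hc'.ne_zero, degree_eq_natDegree hc.ne_zero, hcm, hcm']
        · exact hc.ne_zero
        · rw [hc.leadingCoeff, hc'.leadingCoeff]
      refine this.trans_le ?_
      rw [degree_eq_natDegree hc.ne_zero, degree_eq_natDegree hφ.ne_zero, hn, hcm]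
    exact Subtype.ext (sub_eq_zero.1 h3)
  · intro y
    obtain ⟨r, rfl⟩ := AdjoinRoot.mk_surjective y
    have hd := degree_modByMonic_lt r hφ
    refine ⟨⟨φ + r %ₘ φ, hφ.add_of_left hd, ?_⟩, ?_⟩
    · rw [natDegree_add_eq_left_of_degree_lt hd, hn]
    · simp only [AdjoinRoot.mk_eq_mk]
      refine ⟨1 - r /ₘ φ, ?_⟩
      linear_combination modByMonic_add_div r φ

open Classical in
lemma fiber_count {n : ℕ} (φ : MM F n) :
    Nat.card Fˣ * Nat.card {ψ : MM F n // resultantAC φ.1 ψ.1 = 1} =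
    ∑ d ∈ (Nat.card Fˣ).divisors, d.totient * (if ∃ η : F[X], η.Monic ∧ η ^ d = φ.1 then
      Nat.card {ψ : MM F n // IsCoprime φ.1 ψ.1} else 0) := by
  have hφ := φ.2.1
  have hb := mk_bij φ
  have : Finite (AdjoinRoot φ.1) := Finite.of_surjective _ hb.2
  let f : (AdjoinRoot φ.1)ˣ →* Fˣ := Units.map (resHom hφ)
  have hU : Nat.card {ψ : MM F n // IsCoprime φ.1 ψ.1} = Nat.card (AdjoinRoot φ.1)ˣ := by
    have e : Nat.card (AdjoinRoot φ.1)ˣ = Nat.card {x : AdjoinRoot φ.1 // IsUnit x} :=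
      Nat.card_congr (Equiv.ofBijective (fun u => ⟨u.1, u.isUnit⟩)
        ⟨fun u v h => Units.ext (congrArg Subtype.val h), fun x => ⟨x.2.unit, rfl⟩⟩)
    rw [e]
    exact Nat.card_congr ((Equiv.ofBijective _ hb).subtypeEquiv fun ψ => (isUnit_mk _).symm)
  have hK : Nat.card {ψ : MM F n // resultantAC φ.1 ψ.1 = 1} = Nat.card f.ker := by
    symm
    let g : f.ker → {x : AdjoinRoot φ.1 // resHom hφ x = 1} := fun u =>
      ⟨u.1.1, by
        have := u.2
        rw [MonoidHom.mem_ker] at this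
        exact congrArg Units.val this⟩
    have hg : Function.Bijective g := by
      constructor
      · intro u v h
        exact Subtype.ext (Units.ext (congrArg Subtype.val h))
      · rintro ⟨x, hx⟩
        obtain ⟨a, rfl⟩ := AdjoinRoot.mk_surjective x
        have hu : IsUnit (AdjoinRoot.mk φ.1 a) := by
          rw [isUnit_mk, ← res_ne_zero_iff hφ, ← resHom_mk hφ, hx]
          exact one_ne_zero
        refine ⟨⟨hu.unit, ?_⟩, rfl⟩
        rw [MonoidHom.mem_ker]
        ext
        exact hx
    rw [Nat.card_congr (Equiv.ofBijective g hg)]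
    symm
    refine Nat.card_congr ((Equiv.ofBijective _ hb).subtypeEquiv fun ψ => ?_)
    simp only [Equiv.ofBijective_apply]
    rw [resHom_mk, ← resultantAC_eq hφ]
    exact map_eq_one_iff _ (algebraMap F (AlgebraicClosure F)).injective
  rw [hU, hK]
  refine aux_ker_count f _ fun d hd => ?_
  have hd' := Nat.dvd_of_mem_divisors hd
  have hd0 : d ≠ 0 := (Nat.pos_of_mem_divisors hd).ne'
  constructor
  · rintro ⟨η, hη, h⟩ _ ⟨u, rfl⟩
    obtain ⟨a, ha⟩ := AdjoinRoot.mk_surjective u.1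
    have h1 : ((f u : Fˣ) : F) = resultant η a ^ d := by
      change resHom hφ u.1 = _
      rw [← ha, resHom_mk, ← h, res_pow_left hη]
    have h2 : resultant η a ≠ 0 := by
      intro h0
      rw [h0, zero_pow hd0] at h1
      exact (f u).ne_zero h1
    refine ⟨Units.mk0 _ h2, ?_⟩
    ext
    simp [h1]
  · intro h
    refine pow_of_res d hd' _ φ.1 hφ le_rfl fun r hr => ?_
    have hu := (isUnit_mk r).2 hr
    obtain ⟨x, hx⟩ := h ⟨hu.unit, rfl⟩
    refine ⟨x, ?_⟩
    rw [← resHom_mk hφ]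
    simpa [f] using (congrArg Units.val hx).symm

open Classical in
lemma pow_sum (n d : ℕ) (hn : 1 ≤ n) (hd : d ≠ 0) [Fintype (MM F n)] :
    ∑ φ : MM F n, (if ∃ η : F[X], η.Monic ∧ η ^ d = φ.1 then
      Nat.card {ψ : MM F n // IsCoprime φ.1 ψ.1} else 0) =
    if d ∣ n then Fintype.card F ^ (n - n / d) * CPC F (n / d) else 0 := by
  split_ifs with hdn
  · obtain ⟨m, rfl⟩ := hdn
    have hm : d * m / d = m := Nat.mul_div_cancel_left _ (by omega)
    rw [hm, ← Finset.sum_filter]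
    haveI : Fintype (MM F m) := Fintype.ofFinite _
    have h1 : CPC F m = ∑ η : MM F m, Nat.card {χ : MM F m // IsCoprime η.1 χ.1} := by
      rw [CPC, ← Nat.card_sigma]
      exact Nat.card_congr
        { toFun := fun x => ⟨x.1.1, ⟨x.1.2, x.2⟩⟩
          invFun := fun x => ⟨(x.1, x.2.1), x.2.2⟩
          left_inv := fun _ => rfl
          right_inv := fun _ => rfl }
    rw [h1, Finset.mul_sum]
    symm
    refine Finset.sum_bij (fun η _ => ⟨η.1 ^ d, η.2.1.pow d, by
      rw [η.2.1.natDegree_pow, η.2.2]⟩) ?_ ?_ ?_ ?_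
    · intro η _
      simp only [Finset.mem_filter, Finset.mem_univ, true_and]
      exact ⟨η.1, η.2.1, rfl⟩
    · intro η _ η' _ h
      simp only [Subtype.mk.injEq] at h
      apply Subtype.ext
      apply monic_dvd_antisymm η.2.1 η'.2.1
      · exact (UniqueFactorizationMonoid.pow_dvd_pow_iff_dvd hd).1 h.dvd
      · exact (UniqueFactorizationMonoid.pow_dvd_pow_iff_dvd hd).1 h.symm.dvd
    · rintro ⟨φ, hφ, hφn⟩ hb
      simp only [Finset.mem_filter, Finset.mem_univ, true_and] at hb
      obtain ⟨η, hη, rfl⟩ := hb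
      refine ⟨⟨η, hη, ?_⟩, Finset.mem_univ _, rfl⟩
      rw [hη.natDegree_pow] at hφn
      exact Nat.eq_of_mul_eq_mul_left (by omega) hφn
    · intro η _
      rw [← card_coprime_lift m (d * m) (Nat.le_mul_of_pos_left _ (by omega)) η]
      refine Nat.card_congr (Equiv.subtypeEquivRight fun ψ => ?_)
      simp only
      rw [IsCoprime.pow_left_iff (by omega)]
  · apply Finset.sum_eq_zero
    intro φ _
    rw [if_neg]
    rintro ⟨η, hη, h⟩
    apply hdn
    rw [← φ.2.2, ← h, hη.natDegree_pow]
    exact dvd_mul_right _ _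

lemma ResPairs_card (n : ℕ) [Fintype (MM F n)] :
    Nat.card (ResPairs F n) =
      ∑ φ : MM F n, Nat.card {ψ : MM F n // resultantAC φ.1 ψ.1 = 1} := by
  rw [← Nat.card_sigma]
  exact Nat.card_congr
    { toFun := fun x => ⟨⟨x.1.1, x.2.1, x.2.2.1⟩, ⟨⟨x.1.2, x.2.2.2.1, x.2.2.2.2.1⟩, x.2.2.2.2.2⟩⟩
      invFun := fun x => ⟨(x.1.1, x.2.1.1), x.1.2.1, x.1.2.2, x.2.1.2.1, x.2.1.2.2, x.2.2⟩
      left_inv := fun _ => rfl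
      right_inv := fun _ => rfl }

lemma ResPairs_main (n : ℕ) (hn : 1 ≤ n) :
    (Nat.card (ResPairs F n) : ℤ) = ∑ d ∈ (Nat.card Fˣ).divisors, (d.totient : ℤ) *
      (if d ∣ n then (Fintype.card F : ℤ) ^ n * (Fintype.card F : ℤ) ^ (n / d - 1) else 0) := by
  classical
  haveI : Fintype (MM F n) := Fintype.ofFinite _
  have hQ : (Nat.card Fˣ : ℤ) = Fintype.card F - 1 := by
    rw [Nat.card_units, Nat.card_eq_fintype_card, Nat.cast_sub Fintype.card_pos]; simp
  have hQ0 : (Nat.card Fˣ : ℤ) ≠ 0 := by exact_mod_cast (Nat.card_pos (α := Fˣ)).ne'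
  apply mul_left_cancel₀ hQ0
  have h := ResPairs_card (F := F) n
  have h2 : Nat.card Fˣ * Nat.card (ResPairs F n) = ∑ d ∈ (Nat.card Fˣ).divisors, d.totient *
      (if d ∣ n then Fintype.card F ^ (n - n / d) * CPC F (n / d) else 0) := by
    rw [h, Finset.mul_sum, Finset.sum_congr rfl fun φ _ => fiber_count φ, Finset.sum_comm]
    refine Finset.sum_congr rfl fun d hd => ?_
    rw [← Finset.mul_sum, pow_sum n d hn (Nat.pos_of_mem_divisors hd).ne']
  rw [← Nat.cast_mul, h2, Finset.mul_sum]
  push_cast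
  refine Finset.sum_congr rfl fun d hd => ?_
  have hd0 := Nat.pos_of_mem_divisors hd
  split_ifs with hdn
  · obtain ⟨m, rfl⟩ := hdn
    have hm0 : 1 ≤ m := by
      rcases Nat.eq_zero_or_pos m with rfl | h
      · simp at hn
      · exact h
    rw [Nat.mul_div_cancel_left _ hd0]
    have hc := CC_val (F := F) m hm0
    have hc' : (CPC F m : ℤ) = (Fintype.card F : ℤ) ^ (2 * m) - (Fintype.card F : ℤ) ^ (2 * m - 1) := by
      rw [eq_sub_iff_add_eq]; exact_mod_cast hc
    rw [hc', hQ]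
    obtain ⟨t, ht⟩ : ∃ t, d * m = m + t :=
      ⟨d * m - m, by have := Nat.le_mul_of_pos_left m hd0; omega⟩
    obtain ⟨k, rfl⟩ : ∃ k, m = k + 1 := ⟨m - 1, by omega⟩
    rw [ht, show k + 1 + t - (k + 1) = t by omega, show 2 * (k + 1) - 1 = 2 * k + 1 by omega,
      Nat.add_sub_cancel]
    ring
  · simp
end

/-- `|Res_n(F_q)| = qⁿ · Σ_{abc = n} μ(a) · q^{b-1} · gcd(c, q-1)`. -/
theorem stmt_1 (F : Type*) [Field F] [Fintype F] (q : ℕ) (hq : Fintype.card F = q)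
    (n : ℕ) (hn : 1 ≤ n) :
    (Nat.card (ResPairs F n) : ℤ) =
      (q : ℤ) ^ n *
        ∑ x ∈ n.divisorsAntidiagonal, ∑ y ∈ x.2.divisorsAntidiagonal,
          (ArithmeticFunction.moebius x.1) * (q : ℤ) ^ (y.1 - 1) *
            (Nat.gcd y.2 (q - 1) : ℤ) := by
  subst hq
  have hQ : Nat.card Fˣ = Fintype.card F - 1 := by
    rw [Nat.card_units, Nat.card_eq_fintype_card]
  have hQ0 : Fintype.card F - 1 ≠ 0 := by
    rw [← hQ]; exact (Nat.card_pos (α := Fˣ)).ne'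
  rw [aux_arith, ResPairs_main n hn, hQ, Nat.sum_divisorsAntidiagonal'
    (f := fun a b => (Fintype.card F : ℤ) ^ (a - 1) *
      (if b ∣ Fintype.card F - 1 then (b.totient : ℤ) else 0)), Finset.mul_sum]
  have e1 : ∀ d, (d.totient : ℤ) * (if d ∣ n then (Fintype.card F : ℤ) ^ n *
      (Fintype.card F : ℤ) ^ (n / d - 1) else 0) = if d ∣ n then (d.totient : ℤ) *
      ((Fintype.card F : ℤ) ^ n * (Fintype.card F : ℤ) ^ (n / d - 1)) else 0 := by
    intro d; split_ifs <;> simp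
  have e2 : ∀ d, (Fintype.card F : ℤ) ^ n * ((Fintype.card F : ℤ) ^ (n / d - 1) *
      (if d ∣ Fintype.card F - 1 then (d.totient : ℤ) else 0)) =
      if d ∣ Fintype.card F - 1 then (d.totient : ℤ) *
      ((Fintype.card F : ℤ) ^ n * (Fintype.card F : ℤ) ^ (n / d - 1)) else 0 := by
    intro d; split_ifs
    · ring
    · simp
  simp only [e1, e2]
  rw [← Finset.sum_filter, ← Finset.sum_filter]
  refine Finset.sum_congr ?_ fun _ _ => rfl
  ext d
  simp only [Finset.mem_filter, Nat.mem_divisors]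
  have : n ≠ 0 := by omega
  tauto
end

section
/- For every integer n ≥ 1 and every prime power q with gcd(q−1, n) = 1, the cardinality of Res_n(F_q) equals q^{2n−1}. -/
open Polynomial

/-- monic polynomials of degree `n` -/
def monicSet (F : Type*) [Field F] (n : ℕ) : Set F[X] := {p | p.Monic ∧ p.natDegree = n}

/-- coprime pairs of monic polynomials of degree `n` -/
def copSet (F : Type*) [Field F] (n : ℕ) : Set (F[X] × F[X]) :=
  {p | p.1 ∈ monicSet F n ∧ p.2 ∈ monicSet F n ∧ IsCoprime p.1 p.2}

lemma monicSet_card (F : Type*) [Field F] [Fintype F] (n : ℕ) :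
    Nat.card (monicSet F n) = Fintype.card F ^ n := by
  have e := (monicEquivDegreeLT (R := F) n).trans (degreeLTEquiv F n).toEquiv
  have := Nat.card_congr e
  rw [Nat.card_eq_fintype_card (α := Fin n → F)] at this
  exact Eq.trans this (by simp)

lemma monicSet_finite (F : Type*) [Field F] [Fintype F] (n : ℕ) : (monicSet F n).Finite := by
  have e := (monicEquivDegreeLT (R := F) n).trans (degreeLTEquiv F n).toEquiv
  have : Finite {p : F[X] // p.Monic ∧ p.natDegree = n} := Finite.of_equiv _ e.symm
  exact this

lemma copSet_finite (F : Type*) [Field F] [Fintype F] (n : ℕ) : (copSet F n).Finite :=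
  ((monicSet_finite F n).prod (monicSet_finite F n)).subset fun _ hp => ⟨hp.1, hp.2.1⟩

lemma exists_gcd_decomp {F : Type*} [Field F] {f g : F[X]} (hf : f.Monic) :
    ∃ h a b : F[X], h.Monic ∧ f = h * a ∧ g = h * b ∧ IsCoprime a b := by
  set d := IsBezout.gcd f g with hd
  have h1 : d ∣ f := IsBezout.gcd_dvd_left f g
  have h2 : d ∣ g := IsBezout.gcd_dvd_right f g
  have d0 : d ≠ 0 := fun h => hf.ne_zero (by simpa [h] using h1)
  obtain ⟨s, t, hst⟩ := IsBezout.gcd_eq_sum f g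
  rw [← hd] at hst
  have hc : d.leadingCoeff ≠ 0 := leadingCoeff_ne_zero.mpr d0
  have hm : (d * C d.leadingCoeff⁻¹).Monic := monic_mul_leadingCoeff_inv d0
  obtain ⟨a, ha⟩ := h1
  obtain ⟨b, hb⟩ := h2
  have hCC : C d.leadingCoeff⁻¹ * C d.leadingCoeff = 1 := by
    rw [← C_mul, inv_mul_cancel₀ hc, C_1]
  refine ⟨d * C d.leadingCoeff⁻¹, C d.leadingCoeff * a, C d.leadingCoeff * b, hm, ?_, ?_, ?_⟩
  · linear_combination ha - d * a * hCC
  · linear_combination hb - d * b * hCC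
  · refine ⟨s * C d.leadingCoeff⁻¹, t * C d.leadingCoeff⁻¹, ?_⟩
    have h3 : s * a + t * b = 1 := by
      apply mul_left_cancel₀ d0
      linear_combination hst - s * ha - t * hb
    linear_combination h3 + (s * a + t * b) * hCC

lemma dvd_aux {F : Type*} [Field F] {h h' a b a' b' : F[X]} (hc : IsCoprime a' b')
    (h1 : h * a = h' * a') (h2 : h * b = h' * b') : h ∣ h' := by
  obtain ⟨u, v, huv⟩ := hc
  exact ⟨u * a + v * b, by linear_combination (-h') * huv - u * h1 - v * h2⟩

lemma sum_formula (F : Type*) [Field F] [Fintype F] (n : ℕ) :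
    ∑ d ∈ Finset.range (n + 1), Fintype.card F ^ d * Nat.card (copSet F (n - d))
      = Fintype.card F ^ (2 * n) := by
  classical
  let M : ℕ → Finset F[X] := fun d => (monicSet_finite F d).toFinset
  let K : ℕ → Finset (F[X] × F[X]) := fun d => (copSet_finite F d).toFinset
  have hM : ∀ d, (M d).card = Fintype.card F ^ d := fun d => by
    rw [← monicSet_card, Nat.card_coe_set_eq, Set.ncard_eq_toFinset_card _ (monicSet_finite F d)]
  have hK : ∀ d, (K d).card = Nat.card (copSet F d) := fun d => by
    rw [Nat.card_coe_set_eq, Set.ncard_eq_toFinset_card _ (copSet_finite F d)]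
  have hMm : ∀ d p, p ∈ M d ↔ p.Monic ∧ p.natDegree = d := fun d p => by simp [M, monicSet]
  have hKm : ∀ d p, p ∈ K d ↔ (p.1.Monic ∧ p.1.natDegree = d) ∧ (p.2.Monic ∧ p.2.natDegree = d) ∧
      IsCoprime p.1 p.2 := fun d p => by simp [K, copSet, monicSet]
  have e1 : Fintype.card F ^ (2 * n) = (M n ×ˢ M n).card := by
    rw [Finset.card_product, hM]; ring
  have e2 : ∑ d ∈ Finset.range (n + 1), Fintype.card F ^ d * Nat.card (copSet F (n - d)) =
      ((Finset.range (n + 1)).sigma fun d => M d ×ˢ K (n - d)).card := by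
    rw [Finset.card_sigma]
    simp [hM, hK]
  rw [e1, e2]
  refine Finset.card_bij (fun x _ => (x.2.1 * x.2.2.1, x.2.1 * x.2.2.2)) ?_ ?_ ?_
  · rintro ⟨d, h, a, b⟩ hx
    simp only [Finset.mem_sigma, Finset.mem_range, Finset.mem_product, hMm, hKm] at hx ⊢
    obtain ⟨hd, ⟨hm, hhd⟩, ⟨ha, had⟩, ⟨hb, hbd⟩, -⟩ := hx
    refine ⟨⟨hm.mul ha, ?_⟩, ⟨hm.mul hb, ?_⟩⟩
    · rw [hm.natDegree_mul ha]; omega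
    · rw [hm.natDegree_mul hb]; omega
  · rintro ⟨d, h, a, b⟩ hx ⟨d', h', a', b'⟩ hx' heq
    simp only [Finset.mem_sigma, Finset.mem_range, Finset.mem_product, hMm, hKm] at hx hx'
    simp only [Prod.mk.injEq] at heq
    obtain ⟨hd, ⟨hm, hhd⟩, -, -, hc⟩ := hx
    obtain ⟨hd', ⟨hm', hhd'⟩, -, -, hc'⟩ := hx'
    have hh : h = h' := eq_of_monic_of_associated hm hm'
      (associated_of_dvd_dvd (dvd_aux hc' heq.1 heq.2) (dvd_aux hc heq.1.symm heq.2.symm))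
    subst hh
    have ha := mul_left_cancel₀ hm.ne_zero heq.1
    have hb := mul_left_cancel₀ hm.ne_zero heq.2
    subst ha hb hhd hhd'
    rfl
  · rintro ⟨f, g⟩ hx
    simp only [Finset.mem_product, hMm] at hx
    obtain ⟨⟨hf, hfd⟩, hg, hgd⟩ := hx
    obtain ⟨h, a, b, hm, rfl, rfl, hc⟩ := exists_gcd_decomp (g := g) hf
    have ha := hm.of_mul_monic_left hf
    have hb := hm.of_mul_monic_left hg
    rw [hm.natDegree_mul ha] at hfd
    rw [hm.natDegree_mul hb] at hgd
    refine ⟨⟨h.natDegree, h, a, b⟩, ?_, rfl⟩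
    simp only [Finset.mem_sigma, Finset.mem_range, Finset.mem_product, hMm, hKm]
    exact ⟨by omega, ⟨hm, trivial⟩, ⟨ha, by omega⟩, ⟨hb, by omega⟩, hc⟩

lemma copSet_card (F : Type*) [Field F] [Fintype F] (n : ℕ) (hn : 1 ≤ n) :
    Nat.card (copSet F n) = (Fintype.card F - 1) * Fintype.card F ^ (2 * n - 1) := by
  obtain ⟨m, rfl⟩ : ∃ m, n = m + 1 := ⟨n - 1, by omega⟩
  have h1 := sum_formula F (m + 1)
  have h0 := sum_formula F m
  rw [Finset.sum_range_succ'] at h1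
  simp only [Nat.add_sub_add_right, pow_succ', mul_assoc, ← Finset.mul_sum] at h1
  rw [h0] at h1
  have hq : 1 ≤ Fintype.card F := Fintype.card_pos
  obtain ⟨r, hr⟩ : ∃ r, Fintype.card F = r + 1 := ⟨_, (Nat.sub_add_cancel hq).symm⟩
  rw [hr] at h1 ⊢
  have : 2 * (m + 1) - 1 = 2 * m + 1 := by omega
  rw [this]
  simp only [pow_zero, one_mul, Nat.sub_zero, Nat.add_sub_cancel] at h1 ⊢
  have h2 : (r + 1) ^ (2 * (m + 1)) = (r + 1) * (r + 1) ^ (2 * m) + r * (r + 1) ^ (2 * m + 1) := by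
    ring
  omega

lemma resultantAC_eq_s3 {F : Type*} [Field F] {f g : F[X]} (hf : f.Monic) :
    resultantAC f g = algebraMap F (AlgebraicClosure F) (resultant f g) := by
  have h := resultant_eq_prod_eval (f.map (algebraMap F (AlgebraicClosure F)))
    (g.map (algebraMap F (AlgebraicClosure F))) g.natDegree natDegree_map_le
    (IsAlgClosed.splits _)
  rw [(hf.map _).leadingCoeff, one_pow, one_mul, natDegree_map, resultant_map_map] at h
  exact h.symm

lemma resultantAC_scale {F : Type*} [Field F] (f g : F[X]) (u : F) :
    resultantAC f (f + C u * (g - f)) =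
      algebraMap F (AlgebraicClosure F) u ^ f.natDegree * resultantAC f g := by
  have hcard : (f.map (algebraMap F (AlgebraicClosure F))).roots.card = f.natDegree := by
    rw [← (IsAlgClosed.splits (f.map (algebraMap F (AlgebraicClosure F)))).natDegree_eq_card_roots,
      natDegree_map]
  unfold resultantAC
  rw [← hcard, ← Multiset.prod_replicate, ← Multiset.map_const', ← Multiset.prod_map_mul]
  congr 1
  refine Multiset.map_congr rfl fun α hα => ?_
  have h0 : (f.map (algebraMap F (AlgebraicClosure F))).eval α = 0 := isRoot_of_mem_roots hα
  simp [h0]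

lemma scale_mem {F : Type*} [Field F] {n : ℕ} {f g : F[X]} (hf : f ∈ monicSet F n)
    (hg : g ∈ monicSet F n) (u : F) : f + C u * (g - f) ∈ monicSet F n := by
  have hd : (C u * (g - f)).degree < f.degree := by
    by_cases hu : u = 0
    · subst hu
      simp only [C_0, zero_mul, degree_zero]
      exact bot_lt_iff_ne_bot.mpr (degree_ne_bot.mpr hf.1.ne_zero)
    rw [degree_C_mul hu]
    refine degree_sub_lt_right ?_ hf.1.ne_zero (by rw [hf.1.leadingCoeff, hg.1.leadingCoeff])
    rw [degree_eq_natDegree hf.1.ne_zero, degree_eq_natDegree hg.1.ne_zero, hf.2, hg.2]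
  exact ⟨hf.1.add_of_left hd, (natDegree_add_eq_left_of_degree_lt hd).trans hf.2⟩

lemma coprime_iff {F : Type*} [Field F] {f g : F[X]} (hf : f.Monic) :
    IsCoprime f g ↔ resultantAC f g ≠ 0 := by
  rw [resultantAC_eq_s3 hf, Ne, map_eq_zero, resultant_eq_zero_iff]
  simp [hf.ne_zero]

lemma mul_card (F : Type*) [Field F] [Fintype F] (n : ℕ)
    (hgcd : Nat.gcd (Fintype.card F - 1) n = 1) :
    (Fintype.card F - 1) * Nat.card (ResPairs F n) = Nat.card (copSet F n) := by
  classical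
  have hcop : (Nat.card Fˣ).Coprime n := by
    rw [Nat.card_eq_fintype_card, Fintype.card_units]; exact hgcd
  have hU : Nat.card Fˣ = Fintype.card F - 1 := by
    rw [Nat.card_eq_fintype_card, Fintype.card_units]
  have hinj : Function.Injective (algebraMap F (AlgebraicClosure F)) :=
    (algebraMap F (AlgebraicClosure F)).injective
  rw [← hU, ← Nat.card_prod]
  let φ : Fˣ × ResPairs F n → copSet F n := fun x =>
    ⟨(x.2.1.1, x.2.1.1 + C (x.1 : F) * (x.2.1.2 - x.2.1.1)), by
      obtain ⟨u, ⟨f, g⟩, h1, h2, h3, h4, h5⟩ := x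
      refine ⟨⟨h1, h2⟩, scale_mem ⟨h1, h2⟩ ⟨h3, h4⟩ _, ?_⟩
      change IsCoprime f (f + C (u : F) * (g - f))
      have h6 : resultantAC f g = 1 := h5
      rw [coprime_iff h1, resultantAC_scale, h6]
      simp⟩
  refine Nat.card_congr (Equiv.ofBijective φ ⟨?_, ?_⟩)
  · rintro ⟨u, ⟨f, g⟩, h1, h2, h3, h4, h5⟩ ⟨u', ⟨f', g'⟩, h1', h2', h3', h4', h5'⟩ heq
    simp only [φ, Subtype.mk.injEq, Prod.mk.injEq] at heq
    simp only at h1 h2 h3 h4 h5 h1' h2' h3' h4' h5'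
    obtain ⟨rfl, he⟩ := heq
    have hr := congrArg (resultantAC f) he
    rw [resultantAC_scale, resultantAC_scale, h5, h5', mul_one, mul_one, h2, ← map_pow,
      ← map_pow] at hr
    have hr' : u ^ n = u' ^ n := Units.ext (by simpa using hinj hr)
    have huu : u = u' := (powCoprime hcop).injective (by simpa using hr')
    subst huu
    have hC : C (u : F) ≠ 0 := C_ne_zero.mpr u.ne_zero
    have hg : g = g' := by
      have := mul_left_cancel₀ hC (add_left_cancel he)
      linear_combination this
    subst hg
    rfl
  · rintro ⟨⟨f, g⟩, hf, hg, hc⟩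
    have hr := (coprime_iff hf.1).mp hc
    simp only at hf hg hc hr
    rw [resultantAC_eq_s3 hf.1, Ne, map_eq_zero] at hr
    obtain ⟨u, hu⟩ := (powCoprime hcop).surjective (Units.mk0 _ hr)
    have hu' : (u : F) ^ n = resultant f g := by
      have := congrArg Units.val hu
      simpa using this
    refine ⟨⟨u, ⟨(f, f + C ((u : F)⁻¹) * (g - f)), hf.1, hf.2, (scale_mem hf hg _).1,
      (scale_mem hf hg _).2, ?_⟩⟩, ?_⟩
    · simp only
      rw [resultantAC_scale, resultantAC_eq_s3 hf.1, ← hu', hf.2, ← map_pow, ← map_mul, inv_pow,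
        inv_mul_cancel₀ (pow_ne_zero _ u.ne_zero), map_one]
    · have hCC : C (u : F) * C ((u : F)⁻¹) = 1 := by
        rw [← C_mul, mul_inv_cancel₀ u.ne_zero, C_1]
      refine Subtype.ext (Prod.ext rfl ?_)
      change f + C (u : F) * (f + C ((u : F)⁻¹) * (g - f) - f) = g
      linear_combination (g - f) * hCC


/-- if `gcd(q-1, n) = 1` then `|Res_n(F_q)| = q^{2n-1}`. -/
theorem stmt_3 (F : Type*) [Field F] [Fintype F] (q : ℕ) (hq : Fintype.card F = q)
    (n : ℕ) (hn : 1 ≤ n) (hgcd : Nat.gcd (q - 1) n = 1) :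
    Nat.card (ResPairs F n) = q ^ (2 * n - 1) := by
  subst hq
  have h1 := mul_card F n hgcd
  rw [copSet_card F n hn] at h1
  have h2 : 0 < Fintype.card F - 1 := Nat.sub_pos_of_lt Fintype.one_lt_card
  exact Nat.eq_of_mul_eq_mul_left h2 h1
end

section
/- For every integer n ≥ 1 and every prime power q, the cardinality of Res_n(F_q) equals q^n · Σ (q−1)^{r−1} · gcd(q−1, n_1, …, n_r), where the sum ranges over all integers 1 ≤ r ≤ n and all ordered r-tuples (n_1, …, n_r) of positive integers with n_1 + ⋯ + n_r = n. -/
open Polynomial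

theorem resAC_eq {F : Type*} [Field F] (φ ψ : F[X]) (h : φ.Monic) :
    algebraMap F (AlgebraicClosure F) (resultant φ ψ) = resultantAC φ ψ := by
  have := resultant_eq_prod_eval (φ.map (algebraMap F (AlgebraicClosure F)))
    (ψ.map (algebraMap F (AlgebraicClosure F))) ψ.natDegree natDegree_map_le
    (IsAlgClosed.splits _)
  rw [(h.map _).leadingCoeff, one_pow, one_mul, natDegree_map, resultant_map_map] at this
  exact this

theorem res_add_mul {F : Type*} [Field F] (φ ρ p : F[X]) (h : φ.Monic) :
    resultant φ (ρ + φ * p) = resultant φ ρ := by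
  apply FaithfulSMul.algebraMap_injective F (AlgebraicClosure F)
  rw [resAC_eq _ _ h, resAC_eq _ _ h]
  unfold resultantAC
  congr 1
  apply Multiset.map_congr rfl
  intro x hx
  have : eval x (φ.map (algebraMap F (AlgebraicClosure F))) = 0 := (mem_roots'.1 hx).2
  simp [this]

theorem res_C_mul {F : Type*} [Field F] (φ ρ : F[X]) (b : F) (h : φ.Monic) :
    resultant φ (C b * ρ) = b ^ φ.natDegree * resultant φ ρ := by
  apply FaithfulSMul.algebraMap_injective F (AlgebraicClosure F)
  rw [map_mul, resAC_eq _ _ h, resAC_eq _ _ h]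
  unfold resultantAC
  have hc : Multiset.card (φ.map (algebraMap F (AlgebraicClosure F))).roots = φ.natDegree := by
    rw [← (IsAlgClosed.splits _).natDegree_eq_card_roots, natDegree_map]
  simp [Multiset.prod_map_mul, hc]

section counting
variable {F : Type*} [Field F] [Fintype F]

theorem DF_finite (n : ℕ) : {p : F[X] | p.degree < n}.Finite := by
  have : Finite (degreeLT F n) := Finite.of_equiv _ (degreeLTEquiv F n).toEquiv.symm
  have h2 : ((degreeLT F n : Set F[X])).Finite := Set.toFinite _
  refine h2.subset fun p hp => ?_
  exact mem_degreeLT.2 hp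

theorem MF_finite (n : ℕ) : {p : F[X] | p.Monic ∧ p.natDegree = n}.Finite := by
  refine (DF_finite (F := F) (n + 1)).subset fun p hp => ?_
  have := degree_eq_natDegree hp.1.ne_zero
  rw [hp.2] at this
  simp only [Set.mem_ofPred_eq, this]
  exact_mod_cast Nat.lt_succ_self n

noncomputable def DF (F : Type*) [Field F] [Fintype F] (n : ℕ) : Finset F[X] :=
  (DF_finite (F := F) n).toFinset

noncomputable def MF (F : Type*) [Field F] [Fintype F] (n : ℕ) : Finset F[X] :=
  (MF_finite (F := F) n).toFinset

theorem mem_DF {n : ℕ} {p : F[X]} : p ∈ DF F n ↔ p.degree < n := by simp [DF]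
theorem mem_MF {n : ℕ} {p : F[X]} : p ∈ MF F n ↔ p.Monic ∧ p.natDegree = n := by simp [MF]

theorem MF_degree {n : ℕ} {p : F[X]} (h : p ∈ MF F n) : p.degree = n := by
  rw [mem_MF] at h
  rw [degree_eq_natDegree h.1.ne_zero, h.2]

theorem card_MF (n : ℕ) : (MF F n).card = Fintype.card F ^ n := by
  have e := (monicEquivDegreeLT (R := F) n).trans (degreeLTEquiv F n).toEquiv
  have h1 : Nat.card { p : F[X] // p.Monic ∧ p.natDegree = n } = Fintype.card F ^ n := by
    rw [Nat.card_congr e]; simp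
  rw [← h1]
  exact (Nat.card_eq_card_finite_toFinset (MF_finite (F := F) n)).symm

theorem sum_MF_mod (n m : ℕ) (hm : m ≤ n) (σ : F[X]) (hσ : σ ∈ MF F m) (g : F[X] → ℂ) :
    ∑ φ ∈ MF F n, g (φ %ₘ σ) = (Fintype.card F : ℂ) ^ (n - m) * ∑ τ ∈ DF F m, g τ := by
  have hσ' := mem_MF.1 hσ
  have hd := MF_degree hσ
  have h : ∑ φ ∈ MF F n, g (φ %ₘ σ) = ∑ x ∈ MF F (n - m) ×ˢ DF F m, g x.2 := by
    refine Finset.sum_nbij' (fun φ => (φ /ₘ σ, φ %ₘ σ)) (fun x => x.2 + σ * x.1) ?_ ?_ ?_ ?_ ?_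
    · intro φ hφ
      have hφ' := mem_MF.1 hφ
      simp only [Finset.mem_product, mem_MF, mem_DF]
      refine ⟨⟨?_, ?_⟩, ?_⟩
      · rw [Monic, leadingCoeff_divByMonic_of_monic hσ'.1, hφ'.1.leadingCoeff]
        rw [MF_degree hφ, hd]; exact_mod_cast hm
      · rw [natDegree_divByMonic _ hσ'.1, hφ'.2, hσ'.2]
      · rw [← hd]; exact degree_modByMonic_lt _ hσ'.1
    · intro x hx
      simp only [Finset.mem_product, mem_DF] at hx
      have h1 := mem_MF.1 hx.1
      have hm1 : (σ * x.1).Monic := hσ'.1.mul h1.1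
      have hdm : (σ * x.1).natDegree = n := by
        rw [hσ'.1.natDegree_mul h1.1, hσ'.2, h1.2]; omega
      have hlt : x.2.degree < (σ * x.1).degree := by
        rw [degree_eq_natDegree hm1.ne_zero, hdm]
        exact hx.2.trans_le (by exact_mod_cast hm)
      rw [mem_MF]
      refine ⟨hm1.add_of_right hlt, ?_⟩
      rw [natDegree_add_eq_right_of_degree_lt hlt, hdm]
    · intro φ _
      exact modByMonic_add_div _ _
    · intro x hx
      simp only [Finset.mem_product, mem_DF] at hx
      have := div_modByMonic_unique (f := x.2 + σ * x.1) x.1 x.2 hσ'.1 ⟨rfl, by rw [hd]; exact hx.2⟩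
      ext1
      · exact this.1
      · exact this.2
    · intros; rfl
  rw [h, Finset.sum_product]
  simp [card_MF]

open Classical in
theorem sum_DF (n : ℕ) (g : F[X] → ℂ) (h0 : g 0 = 0) :
    ∑ ρ ∈ DF F n, g ρ =
      ∑ m ∈ Finset.range n, ∑ σ ∈ MF F m, ∑ b ∈ Finset.univ.erase (0 : F), g (C b * σ) := by
  have h1 : ∑ ρ ∈ DF F n, g ρ = ∑ ρ ∈ (DF F n).erase 0, g ρ := by
    symm; exact Finset.sum_erase _ h0
  rw [h1, ← Finset.sum_fiberwise_of_maps_to (t := Finset.range n) (g := natDegree)]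
  · refine Finset.sum_congr rfl fun m hm => ?_
    rw [Finset.mem_range] at hm
    rw [← Finset.sum_product']
    refine Finset.sum_nbij' (fun ρ => (C (ρ.leadingCoeff)⁻¹ * ρ, ρ.leadingCoeff))
      (fun x => C x.2 * x.1) ?_ ?_ ?_ ?_ ?_
    · intro ρ hρ
      simp only [Finset.mem_filter, Finset.mem_erase] at hρ
      have hl : ρ.leadingCoeff ≠ 0 := leadingCoeff_ne_zero.2 hρ.1.1
      simp only [Finset.mem_product, mem_MF, Finset.mem_erase, Finset.mem_univ, and_true]
      refine ⟨⟨?_, ?_⟩, hl⟩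
      · simp [Monic, hl]
      · rw [natDegree_C_mul (inv_ne_zero hl), hρ.2]
    · intro x hx
      simp only [Finset.mem_product, Finset.mem_erase, Finset.mem_univ, and_true] at hx
      have h1 := mem_MF.1 hx.1
      simp only [Finset.mem_filter, Finset.mem_erase, mem_DF]
      refine ⟨⟨mul_ne_zero (C_ne_zero.2 hx.2) h1.1.ne_zero, ?_⟩, ?_⟩
      · rw [degree_C_mul hx.2, MF_degree hx.1]; exact_mod_cast hm
      · rw [natDegree_C_mul hx.2, h1.2]
    · intro ρ hρ
      simp only [Finset.mem_filter, Finset.mem_erase] at hρ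
      have hl : ρ.leadingCoeff ≠ 0 := leadingCoeff_ne_zero.2 hρ.1.1
      simp only [← mul_assoc, ← C_mul, mul_inv_cancel₀ hl, C_1, one_mul]
    · intro x hx
      simp only [Finset.mem_product, Finset.mem_erase, Finset.mem_univ, and_true] at hx
      have h1 := mem_MF.1 hx.1
      have : (C x.2 * x.1).leadingCoeff = x.2 := by simp [h1.1.leadingCoeff]
      ext1
      · simp only [this, ← mul_assoc, ← C_mul, inv_mul_cancel₀ hx.2, C_1, one_mul]
      · exact this
    · intro ρ hρ
      simp only [Finset.mem_filter, Finset.mem_erase] at hρ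
      have hl : ρ.leadingCoeff ≠ 0 := leadingCoeff_ne_zero.2 hρ.1.1
      simp only [← mul_assoc, ← C_mul, mul_inv_cancel₀ hl, C_1, one_mul]
  · intro ρ hρ
    simp only [Finset.mem_erase, mem_DF] at hρ
    rw [Finset.mem_range, natDegree_lt_iff_degree_lt hρ.1]
    exact hρ.2

noncomputable def SS (χ : MulChar F ℂ) (n : ℕ) : ℂ :=
  ∑ φ ∈ MF F n, ∑ ρ ∈ DF F n, χ (resultant φ ρ)

theorem SS_zero (χ : MulChar F ℂ) : SS χ 0 = 1 := by
  have h1 : MF F 0 = {1} := by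
    ext p
    simp only [mem_MF, Finset.mem_singleton]
    constructor
    · rintro ⟨h, h'⟩; exact h.natDegree_eq_zero.1 h'
    · rintro rfl; simp
  have h2 : DF F 0 = {0} := by
    ext p
    simp [mem_DF]
  simp [SS, h1, h2]

open Classical in
theorem sum_chi (χ : MulChar F ℂ) (n : ℕ) (hn : 1 ≤ n) :
    ∑ b ∈ Finset.univ.erase (0 : F), χ b ^ n =
      if χ ^ n = 1 then ((Fintype.card F : ℂ) - 1) else 0 := by
  have h : ∀ b, χ b ^ n = (χ ^ n) b := fun b => (MulChar.pow_apply' χ (by omega) b).symm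
  simp only [h]
  rw [Finset.sum_erase _ (MulChar.map_zero _)]
  split_ifs with hc
  · rw [hc, MulChar.sum_one_eq_card_units, Fintype.card_units, Nat.cast_sub Fintype.card_pos]
    simp
  · exact MulChar.sum_eq_zero_of_ne_one hc

open Classical in
theorem SS_rec (χ : MulChar F ℂ) (n : ℕ) (hn : 1 ≤ n) :
    SS χ n = (if χ ^ n = 1 then ((Fintype.card F : ℂ) - 1) else 0) *
      ∑ m ∈ Finset.range n, (Fintype.card F : ℂ) ^ (n - m) * SS χ m := by
  have h1 : SS χ n = ∑ φ ∈ MF F n, ∑ m ∈ Finset.range n, ∑ σ ∈ MF F m,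
      (∑ b ∈ Finset.univ.erase (0 : F), χ b ^ n) * (χ (-1) ^ (n * m) * χ (resultant σ (φ %ₘ σ))) := by
    refine Finset.sum_congr rfl fun φ hφ => ?_
    have hφ' := mem_MF.1 hφ
    rw [sum_DF]
    · refine Finset.sum_congr rfl fun m hm => Finset.sum_congr rfl fun σ hσ => ?_
      have hσ' := mem_MF.1 hσ
      rw [Finset.sum_mul]
      refine Finset.sum_congr rfl fun b hb => ?_
      rw [res_C_mul _ _ _ hφ'.1, resultant_comm, hφ'.2, hσ'.2, map_mul, map_mul, map_pow, map_pow]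
      congr 3
      have := res_add_mul σ (φ %ₘ σ) (φ /ₘ σ) hσ'.1
      rw [modByMonic_add_div, hφ'.2, hσ'.2] at this
      rw [this]
    · rw [resultant_zero_right]
      simp [hφ'.2, show n ≠ 0 by omega, MulChar.map_zero]
  rw [h1, Finset.sum_comm, Finset.mul_sum]
  refine Finset.sum_congr rfl fun m hm => ?_
  rw [Finset.mem_range] at hm
  rw [Finset.sum_comm, SS, Finset.mul_sum, Finset.mul_sum]
  refine Finset.sum_congr rfl fun σ hσ => ?_
  rw [sum_chi _ _ hn]
  split_ifs with hc
  · have hs : χ (-1) ^ (n * m) = 1 := by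
      rw [pow_mul, ← MulChar.pow_apply' χ (by omega), hc, MulChar.one_apply (by simp), one_pow]
    rw [hs, ← Finset.mul_sum]
    simp only [one_mul]
    rw [sum_MF_mod n m hm.le σ hσ (fun τ => χ (resultant σ τ))]
  · simp

end counting

section comb
open Classical in
noncomputable def BB {G : Type*} [Group G] (x : G) (r n : ℕ) : Finset (Fin r → ℕ) :=
  (Finset.Nat.antidiagonalTuple r n).filter (fun f => ∀ i, 1 ≤ f i ∧ x ^ f i = 1)

theorem mem_BB {G : Type*} [Group G] {x : G} {r n : ℕ} {f : Fin r → ℕ} :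
    f ∈ BB x r n ↔ ∑ i, f i = n ∧ ∀ i, 1 ≤ f i ∧ x ^ f i = 1 := by
  simp [BB, Finset.Nat.mem_antidiagonalTuple]

theorem BB_pow {G : Type*} [Group G] {x : G} {r n : ℕ} {f : Fin r → ℕ} (h : f ∈ BB x r n) :
    x ^ n = 1 := by
  rw [mem_BB] at h
  rw [← h.1, ← orderOf_dvd_iff_pow_eq_one]
  exact Finset.dvd_sum fun i _ => orderOf_dvd_iff_pow_eq_one.2 (h.2 i).2

theorem BB_le {G : Type*} [Group G] {x : G} {r n : ℕ} {f : Fin r → ℕ} (h : f ∈ BB x r n) :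
    r ≤ n := by
  rw [mem_BB] at h
  rw [← h.1]
  calc r = ∑ i : Fin r, 1 := by simp
    _ ≤ _ := Finset.sum_le_sum fun i _ => (h.2 i).1

theorem card_BB_zero {G : Type*} [Group G] (x : G) (n : ℕ) :
    (BB x 0 n).card = if n = 0 then 1 else 0 := by
  split_ifs with h
  · subst h; simp [BB]
  · rw [Finset.card_eq_zero, Finset.eq_empty_iff_forall_notMem]
    intro f hf
    have := (mem_BB.1 hf).1
    simp at this
    omega

theorem card_BB_of_lt {G : Type*} [Group G] (x : G) {r n : ℕ} (h : n < r) :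
    (BB x r n).card = 0 := by
  rw [Finset.card_eq_zero, Finset.eq_empty_iff_forall_notMem]
  intro f hf
  have := BB_le hf
  omega

open Classical in
theorem card_BB_succ {G : Type*} [Group G] (x : G) (r n : ℕ) :
    (BB x (r + 1) n).card = if x ^ n = 1 then ∑ b ∈ Finset.range n, (BB x r b).card else 0 := by
  split_ifs with h
  · rw [← Finset.card_sigma]
    refine Finset.card_nbij' (fun f => ⟨n - f 0, Fin.tail f⟩)
      (fun y => Fin.cons (n - y.1) y.2) ?_ ?_ ?_ ?_
    · intro f hf
      have hf := mem_BB.1 hf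
      rw [Fin.sum_univ_succ] at hf
      have h0 := hf.2 0
      have := hf.1
      simp only [Finset.coe_sigma, Set.mem_sigma_iff, Finset.mem_coe, Finset.mem_range, mem_BB]
      refine ⟨by omega, ?_, fun i => hf.2 i.succ⟩
      simp only [Fin.tail]
      omega
    · rintro ⟨b, g⟩ hg
      simp only [Finset.coe_sigma, Set.mem_sigma_iff, Finset.mem_coe, Finset.mem_range] at hg
      have hb := BB_pow hg.2
      have hg' := mem_BB.1 hg.2
      simp only [Finset.mem_coe, mem_BB, Fin.sum_univ_succ, Fin.cons_zero, Fin.cons_succ, hg'.1,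
        Fin.forall_fin_succ]
      refine ⟨by omega, ⟨by omega, ?_⟩, hg'.2⟩
      have : x ^ (n - b) * x ^ b = 1 := by rw [← pow_add, Nat.sub_add_cancel hg.1.le, h]
      rwa [hb, mul_one] at this
    · intro f hf
      have hf := mem_BB.1 hf
      rw [Fin.sum_univ_succ] at hf
      have := hf.1
      have e : n - (n - f 0) = f 0 := by omega
      simp only [e]
      exact Fin.cons_self_tail f
    · rintro ⟨b, g⟩ hg
      simp only [Finset.coe_sigma, Set.mem_sigma_iff, Finset.mem_coe, Finset.mem_range] at hg
      have e : n - (n - b) = b := by omega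
      simp [e]
  · rw [Finset.card_eq_zero, Finset.eq_empty_iff_forall_notMem]
    intro f hf
    exact h (BB_pow hf)
end comb

section final
variable {F : Type*} [Field F] [Fintype F]

theorem SS_eq (χ : MulChar F ℂ) (N n : ℕ) (hn : n < N) :
    SS χ n = (Fintype.card F : ℂ) ^ n *
      ∑ r ∈ Finset.range N, ((Fintype.card F : ℂ) - 1) ^ r * (BB χ r n).card := by
  classical
  induction n using Nat.strong_induction_on with
  | _ n ih =>
    obtain ⟨N, rfl⟩ : ∃ M, N = M + 1 := ⟨N - 1, by omega⟩
    rcases Nat.eq_zero_or_pos n with rfl | hpos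
    · rw [SS_zero, Finset.sum_range_succ']
      rw [Finset.sum_eq_zero]
      · simp [card_BB_zero]
      · intro r _
        rw [card_BB_of_lt _ (by omega)]; simp
    · rw [SS_rec _ _ hpos, Finset.sum_range_succ']
      rw [card_BB_zero, if_neg (show ¬ n = 0 by omega)]
      simp only [card_BB_succ]
      split_ifs with hc
      · have : ∑ m ∈ Finset.range n, (Fintype.card F : ℂ) ^ (n - m) * SS χ m =
          (Fintype.card F : ℂ) ^ n * ∑ m ∈ Finset.range n,
            ∑ r ∈ Finset.range N, ((Fintype.card F : ℂ) - 1) ^ r * (BB χ r m).card := by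
          rw [Finset.mul_sum]
          refine Finset.sum_congr rfl fun m hm => ?_
          rw [Finset.mem_range] at hm
          rw [ih m hm (by omega), ← mul_assoc, ← pow_add, Nat.sub_add_cancel hm.le,
            Finset.sum_range_succ, card_BB_of_lt _ (show m < N by omega)]
          simp
        rw [this, Finset.sum_comm]
        simp only [Nat.cast_sum, Finset.mul_sum, Nat.cast_zero, mul_zero, add_zero, pow_succ]
        refine Finset.sum_congr rfl fun r _ => Finset.sum_congr rfl fun m _ => ?_
        ring
      · simp

theorem sum_all_chars [Fintype (MulChar F ℂ)] [DecidableEq F] (a : F) :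
    ∑ χ : MulChar F ℂ, χ a = if a = 1 then ((Fintype.card F : ℂ) - 1) else 0 := by
  split_ifs with ha
  · subst ha
    have h := MulChar.card_eq_card_units_of_hasEnoughRootsOfUnity F ℂ
    simp only [map_one, Finset.sum_const, Finset.card_univ, nsmul_eq_mul, mul_one]
    rw [← Nat.card_eq_fintype_card, h, Nat.card_eq_fintype_card, Fintype.card_units,
      Nat.cast_sub Fintype.card_pos]
    simp
  · obtain ⟨χ, hχ⟩ := MulChar.exists_apply_ne_one_of_hasEnoughRootsOfUnity F ℂ ha
    refine eq_zero_of_mul_eq_self_left hχ ?_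
    simp only [Finset.mul_sum, ← MulChar.mul_apply]
    exact Fintype.sum_bijective _ (Group.mulLeft_bijective χ) _ _ fun χ' ↦ rfl

open Classical in
theorem card_chars_pow [Fintype (MulChar F ℂ)] (d : ℕ) :
    (Finset.univ.filter (fun χ : MulChar F ℂ => χ ^ d = 1)).card =
      Nat.gcd (Fintype.card F - 1) d := by
  obtain ⟨e⟩ := MulChar.mulEquiv_units F ℂ
  have hc : IsCyclic (MulChar F ℂ) := isCyclic_of_surjective e.symm e.symm.surjective
  have h := IsCyclic.card_powMonoidHom_ker (G := MulChar F ℂ) d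
  rw [MulChar.card_eq_card_units_of_hasEnoughRootsOfUnity F ℂ, Nat.card_eq_fintype_card (α := Fˣ),
    Fintype.card_units] at h
  rw [← h, ← Fintype.card_subtype, ← Nat.card_eq_fintype_card]
  rfl

open Classical in
theorem sum_card_BB [Fintype (MulChar F ℂ)] (r n : ℕ) :
    ∑ χ : MulChar F ℂ, (BB χ r n).card =
      ∑ f ∈ (Finset.Nat.antidiagonalTuple r n).filter (fun f => ∀ i, 1 ≤ f i),
        Nat.gcd (Fintype.card F - 1) (Finset.univ.gcd f) := by
  have h : ∀ χ : MulChar F ℂ, (BB χ r n).card =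
      ∑ f ∈ (Finset.Nat.antidiagonalTuple r n).filter (fun f => ∀ i, 1 ≤ f i),
        if χ ^ (Finset.univ.gcd f) = 1 then 1 else 0 := by
    intro χ
    rw [← Finset.sum_filter, Finset.filter_filter, ← Finset.card_eq_sum_ones]
    congr 1
    ext f
    simp only [mem_BB, Finset.mem_filter, Finset.Nat.mem_antidiagonalTuple,
      ← orderOf_dvd_iff_pow_eq_one, Finset.dvd_gcd_iff, forall_and, Finset.mem_univ,
      forall_const]
  simp only [h]
  rw [Finset.sum_comm]
  refine Finset.sum_congr rfl fun f _ => ?_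
  rw [← card_chars_pow, Finset.card_filter]

open Classical in
theorem card_ResPairs (n : ℕ) :
    (Nat.card (ResPairs F n) : ℂ) =
      ∑ φ ∈ MF F n, ∑ ρ ∈ DF F n, if resultant φ ρ = 1 then 1 else 0 := by
  rw [← Finset.sum_product', ← Finset.sum_filter, Finset.sum_const, nsmul_eq_mul, mul_one]
  congr 1
  rw [← Nat.card_eq_finsetCard]
  have key : ∀ φ ψ : F[X], φ.Monic → (resultantAC φ ψ = 1 ↔ resultant φ (ψ - φ) = 1) := by
    intro φ ψ h
    have h1 := res_add_mul φ (ψ - φ) 1 h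
    rw [mul_one, sub_add_cancel] at h1
    rw [← h1, ← resAC_eq φ ψ h]
    exact map_eq_one_iff _ (FaithfulSMul.algebraMap_injective F (AlgebraicClosure F))
  refine Nat.card_congr ⟨fun p => ⟨(p.1.1, p.1.2 - p.1.1), ?_⟩,
    fun p => ⟨(p.1.1, p.1.2 + p.1.1), ?_⟩, ?_, ?_⟩
  · obtain ⟨⟨φ, ψ⟩, h1, h2, h3, h4, h5⟩ := p
    simp only at h1 h2 h3 h4 h5
    simp only [Finset.mem_filter, Finset.mem_product, mem_MF, mem_DF]
    refine ⟨⟨⟨h1, h2⟩, ?_⟩, (key φ ψ h1).1 h5⟩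
    have hd : ψ.degree = n := by rw [degree_eq_natDegree h3.ne_zero, h4]
    have hd' : φ.degree = n := by rw [degree_eq_natDegree h1.ne_zero, h2]
    rw [← hd]
    exact degree_sub_lt_left (hd.trans hd'.symm) h3.ne_zero (by rw [h1.leadingCoeff, h3.leadingCoeff])
  · obtain ⟨⟨φ, ρ⟩, h⟩ := p
    simp only [Finset.mem_filter, Finset.mem_product, mem_MF, mem_DF] at h
    obtain ⟨⟨⟨h1, h2⟩, h3⟩, h4⟩ := h
    have hd' : φ.degree = n := by rw [degree_eq_natDegree h1.ne_zero, h2]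
    have hlt : ρ.degree < φ.degree := by rw [hd']; exact h3
    refine ⟨h1, h2, h1.add_of_right hlt, ?_, ?_⟩
    · simp only
      rw [natDegree_add_eq_right_of_degree_lt hlt, h2]
    · simp only
      rw [key _ _ h1, add_sub_cancel_right, h4]
  · intro p; simp
  · intro p; simp

end final

/-- `|Res_n(F_q)| = qⁿ · Σ_{r=1}^{n} Σ_{n = n₁ + ⋯ + n_r, nᵢ ≥ 1}
(q-1)^{r-1} · gcd(q-1, n₁, …, n_r)`. -/
theorem stmt_11 (F : Type*) [Field F] [Fintype F] (q : ℕ) (hq : Fintype.card F = q)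
    (n : ℕ) (hn : 1 ≤ n) :
    Nat.card (ResPairs F n) =
      q ^ n * ∑ r ∈ Finset.Icc 1 n,
        ∑ f ∈ (Finset.Nat.antidiagonalTuple r n).filter (fun f => ∀ i, 1 ≤ f i),
          (q - 1) ^ (r - 1) * Nat.gcd (q - 1) (Finset.univ.gcd f) := by
  classical
  have : Fintype (MulChar F ℂ) := Fintype.ofFinite _
  have hq1 : 1 < q := hq ▸ Fintype.one_lt_card
  have hne : (q : ℂ) - 1 ≠ 0 := by
    rw [sub_ne_zero]
    exact_mod_cast hq1.ne'
  have e1 : ((q : ℂ) - 1) * (Nat.card (ResPairs F n) : ℂ) = ∑ χ : MulChar F ℂ, SS χ n := by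
    simp only [SS]
    rw [Finset.sum_comm, card_ResPairs, Finset.mul_sum]
    refine Finset.sum_congr rfl fun φ _ => ?_
    rw [Finset.sum_comm, Finset.mul_sum]
    refine Finset.sum_congr rfl fun ρ _ => ?_
    rw [sum_all_chars, hq]
    simp
  have e2 : ∑ χ : MulChar F ℂ, SS χ n = (q : ℂ) ^ n * ∑ r ∈ Finset.range (n + 1),
      ((q : ℂ) - 1) ^ r * ((∑ f ∈ (Finset.Nat.antidiagonalTuple r n).filter (fun f => ∀ i, 1 ≤ f i),
        Nat.gcd (q - 1) (Finset.univ.gcd f) : ℕ) : ℂ) := by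
    simp only [fun χ : MulChar F ℂ => SS_eq χ (n + 1) n (Nat.lt_succ_self n)]
    rw [← Finset.mul_sum, Finset.sum_comm, hq]
    congr 1
    refine Finset.sum_congr rfl fun r _ => ?_
    rw [← Finset.mul_sum, ← hq, ← sum_card_BB]
    push_cast
    rfl
  have hI : Finset.Icc 1 n = Finset.Ico 1 (n + 1) := by
    ext; simp only [Finset.mem_Icc, Finset.mem_Ico]; omega
  obtain ⟨k, rfl⟩ : ∃ k, n = k + 1 := ⟨n - 1, by omega⟩
  rw [← Nat.cast_inj (R := ℂ)]
  apply mul_left_cancel₀ hne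
  rw [e1, e2, Finset.sum_range_succ', hI, Finset.sum_Ico_eq_sum_range]
  rw [Finset.Nat.antidiagonalTuple_zero_succ]
  simp only [Finset.filter_empty, Finset.sum_empty, Nat.cast_zero, mul_zero, add_zero,
    ← Finset.mul_sum, Nat.add_sub_cancel_left, Nat.add_sub_cancel]
  push_cast [Nat.cast_sub hq1.le]
  rw [← mul_assoc, mul_comm _ ((q : ℂ) ^ (k + 1)), mul_assoc]
  congr 1
  rw [Finset.mul_sum]
  refine Finset.sum_congr rfl fun r _ => ?_
  rw [pow_succ, add_comm 1 r]
  ring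
end
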